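/- arXiv:1306.0751 — 8 statements merged into one kernel-verified Lean document; each statement's English description precedes it below -/
import Mathlib

section
/- Let ι be a finite index type, V : ι → Type a family of finite types, and R a commutative semiring. Let A and B be finite subsets of ι with A ∪ B = ι, and let F be an R-valued function on partial assignments on A and G an R-valued function on partial assignments on B. Then the sum over all assignments v of F(v|_A)·G(v|_B) equals the sum over all partial assignments u on A ∩ B of the product (∑ over partial assignments a on A \ B of F(u combined with a)) · (∑ over partial assignments b on B \ A of G(u combined with b)). -/
/-!
Since `A ∪ B` is all of `ι`, the index set is the disjoint union of `A ∩ B`, `A \ B` and `B \ A`, so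
an assignment is a triple `(u, a, b)` of partial assignments on these pieces (`splitEquiv`).
Its restriction to `A` is `u` combined with `a`, and its restriction to `B` is `u` combined with `b`.
Hence for fixed `u` the summand is a function of `a` times a function of `b`, and distributivity
turns the sum over pairs `(a, b)` into a product of two sums.
-/

open Finset

/-- Combine a partial assignment on `S` with a partial assignment on `T` into a partial
assignment on `U ⊆ S ∪ T`, preferring the value from `S` where both are defined. -/
def comb {ι : Type*} [DecidableEq ι] {V : ι → Type*} {S T U : Finset ι} (hU : U ⊆ S ∪ T)
    (u : (i : S) → V i) (a : (i : T) → V i) : (i : U) → V i :=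
  fun i =>
    if hs : (i : ι) ∈ S then u ⟨i, hs⟩
    else a ⟨i, (Finset.mem_union.mp (hU i.2)).resolve_left hs⟩

/-- An assignment on the whole of `ι = A ∪ B` is the same thing as a partial assignment on each of
the three disjoint pieces `A ∩ B`, `A \ B` and `B \ A`. -/
def splitEquiv {ι : Type*} [Fintype ι] [DecidableEq ι] {V : ι → Type*}
    (A B : Finset ι) (hAB : A ∪ B = Finset.univ) :
    (∀ i, V i) ≃ (((i : (A ∩ B : Finset ι)) → V i) × ((i : (A \ B : Finset ι)) → V i)) ×
      ((i : (B \ A : Finset ι)) → V i) where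
  toFun v := ((fun i => v i, fun i => v i), fun i => v i)
  invFun p i :=
    if hA : i ∈ A then
      if hB : i ∈ B then p.1.1 ⟨i, mem_inter.mpr ⟨hA, hB⟩⟩
      else p.1.2 ⟨i, mem_sdiff.mpr ⟨hA, hB⟩⟩
    else p.2 ⟨i, mem_sdiff.mpr
      ⟨(mem_union.mp (hAB ▸ mem_univ i)).resolve_left hA, hA⟩⟩
  left_inv v := by
    funext i
    dsimp only
    split_ifs <;> rfl
  right_inv p := by
    refine Prod.ext (Prod.ext ?_ ?_) ?_ <;> funext ⟨i, hi⟩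
    · have h := mem_inter.mp hi
      simp [h.1, h.2]
    · have h := mem_sdiff.mp hi
      simp [h.1, h.2]
    · have h := mem_sdiff.mp hi
      simp [h.2]

/-- Correctness of the decomposition rule for sum-product computations, for a partition of
the factors into two groups with variable scopes `A` and `B`. -/
theorem decomposition_rule_two {ι : Type*} [Fintype ι] [DecidableEq ι]
    {V : ι → Type*} [∀ i, Fintype (V i)] {R : Type*} [CommSemiring R]
    (A B : Finset ι) (hAB : A ∪ B = Finset.univ)
    (F : ((i : A) → V i) → R) (G : ((i : B) → V i) → R) :
    ∑ v : (∀ i, V i), F (fun i => v i) * G (fun i => v i) =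
      ∑ u : (i : (A ∩ B : Finset ι)) → V i,
        (∑ a : (i : (A \ B : Finset ι)) → V i,
            F (comb (by intro i hi; simp only [mem_union, mem_inter, mem_sdiff]; tauto) u a)) *
        (∑ b : (i : (B \ A : Finset ι)) → V i,
            G (comb (by intro i hi; simp only [mem_union, mem_inter, mem_sdiff]; tauto) u b)) := by
  simp only [Fintype.sum_mul_sum]
  rw [← (splitEquiv A B hAB).symm.sum_comp, Fintype.sum_prod_type, Fintype.sum_prod_type]
  refine Fintype.sum_congr _ _ fun u => Fintype.sum_congr _ _ fun a =>
    Fintype.sum_congr _ _ fun b => ?_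
  congr 2 <;> funext ⟨i, hi⟩
  · by_cases hB : i ∈ B <;> simp [comb, splitEquiv, hi, hB]
  · by_cases hA : i ∈ A <;> simp [comb, splitEquiv, hi, hA]
end

section
/- Let ι be a finite index type, V : ι → Type a family of finite types, and R a commutative semiring. Let S_1, …, S_k be finite subsets of ι whose union is ι, and for each j let F_j be an R-valued function on partial assignments on S_j. Let V' = ⋃_{j ≠ l} (S_j ∩ S_l). Then the sum over all assignments v of ∏_{j=1}^k F_j(v|_{S_j}) equals the sum over all partial assignments u on V' of ∏_{j=1}^k (∑ over partial assignments a_j on S_j \ V' of F_j(u|_{S_j ∩ V'} combined with a_j)). -/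
/-!
A variable outside `sharedVars S` lies in exactly one scope, so an assignment is the same thing
as a partial assignment on the shared variables together with an independent choice, for each
`j`, of values on the private part `S j \ sharedVars S` (`bijective_restrict`). Distributivity
turns the product of inner sums into a sum over these families of choices, and the bijection
identifies the resulting double sum with the sum over all assignments.
-/

open Finset

/-- The set `V' = ⋃_{j ≠ l} (S j ∩ S l)` of variables shared between at least two of the
scopes `S 1, …, S k`. -/
def sharedVars {ι : Type*} [DecidableEq ι] {k : ℕ} (S : Fin k → Finset ι) : Finset ι :=
  Finset.univ.biUnion fun j => Finset.univ.biUnion fun l =>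
    if j = l then ∅ else S j ∩ S l

theorem mem_sharedVars {ι : Type*} [DecidableEq ι] {k : ℕ} {S : Fin k → Finset ι} {i : ι} :
    i ∈ sharedVars S ↔ ∃ j l, j ≠ l ∧ i ∈ S j ∧ i ∈ S l := by
  simp only [sharedVars, mem_biUnion, mem_univ, true_and]
  refine exists_congr fun j => exists_congr fun l => ?_
  split_ifs with h <;> simp [h]

/-- Restricting an assignment to the shared variables and to the private variables of each
scope loses nothing, because the scopes cover `ι`, and the pieces can be chosen freely, because
an unshared variable lies in exactly one scope. -/
theorem bijective_restrict {ι : Type*} [Fintype ι] [DecidableEq ι] {V : ι → Type*}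
    {k : ℕ} (S : Fin k → Finset ι) (hcover : Finset.univ.biUnion S = Finset.univ) :
    Function.Bijective (fun v : ∀ i, V i =>
      ((fun i => v i, fun _ i => v i) :
        ((i : (sharedVars S : Finset ι)) → V i) ×
          ((j : Fin k) → (i : (S j \ sharedVars S : Finset ι)) → V i))) := by
  have hex : ∀ i, ∃ j, i ∈ S j := fun i => by
    have h : i ∈ Finset.univ.biUnion S := hcover ▸ Finset.mem_univ i
    simpa using h
  constructor
  · intro v w h
    obtain ⟨h1, h2⟩ := Prod.mk.inj h
    funext i
    by_cases hi : i ∈ sharedVars S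
    · exact congrFun h1 ⟨i, hi⟩
    · obtain ⟨j, hj⟩ := hex i
      exact congrFun (congrFun h2 j) ⟨i, mem_sdiff.2 ⟨hj, hi⟩⟩
  · rintro ⟨u, p⟩
    choose c hc using hex
    refine ⟨fun i => if hi : i ∈ sharedVars S then u ⟨i, hi⟩
      else p (c i) ⟨i, mem_sdiff.2 ⟨hc i, hi⟩⟩, Prod.ext ?_ ?_⟩
    · funext i
      exact dif_pos i.2
    · funext j i
      obtain ⟨i, hi⟩ := i
      obtain ⟨hj, hn⟩ := mem_sdiff.1 hi
      obtain rfl : c i = j := by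
        by_contra hne
        exact hn (mem_sharedVars.2 ⟨_, _, hne, hc i, hj⟩)
      exact dif_neg hn

/-- Correctness of the general decomposition rule (Definition 1): decomposing the
sum-product `∑_𝒱 M(𝒱)` with respect to a partition of the factors into groups with scopes
`S 1, …, S k`, where `V' = ⋃_{j ≠ l} (S j ∩ S l)` is the set of shared variables. -/
theorem decomposition_rule {ι : Type*} [Fintype ι] [DecidableEq ι]
    {V : ι → Type*} [∀ i, Fintype (V i)] {R : Type*} [CommSemiring R]
    {k : ℕ} (S : Fin k → Finset ι)
    (hcover : Finset.univ.biUnion S = Finset.univ)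
    (F : (j : Fin k) → ((i : (S j : Finset ι)) → V i) → R) :
    ∑ v : (∀ i, V i), ∏ j, F j (fun i => v i) =
      ∑ u : (i : (sharedVars S : Finset ι)) → V i, ∏ j,
        ∑ a : (i : (S j \ sharedVars S : Finset ι)) → V i,
          F j (comb (S := S j ∩ sharedVars S) (T := S j \ sharedVars S) (U := S j)
            (by intro i hi; simp only [mem_union, mem_inter, mem_sdiff]; tauto)
            (fun i => u ⟨i, (Finset.mem_inter.mp i.2).2⟩) a) := by
  simp_rw [Finset.prod_univ_sum, Fintype.piFinset_univ]
  rw [← Fintype.sum_prod_type']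
  refine Fintype.sum_bijective _ (bijective_restrict S hcover) _ _ fun v => ?_
  refine Finset.prod_congr rfl fun j _ => congrArg (F j) ?_
  funext i
  simp only [comb, dite_eq_ite, ite_self]
end

section
/- Let ι be a finite index type, V : ι → Type a family of finite types, and R a commutative semiring. Let S_1, …, S_k be pairwise disjoint finite subsets of ι whose union is ι. Let W be a finite type, G : W → R, and suppose that for each j there is a bijection e_j from the partial assignments on S_j to W such that F_j = G ∘ e_j. Then the sum over all assignments v of ∏_{j=1}^k F_j(v|_{S_j}) equals (∑_{w : W} G w)^k. -/
/-!
Since the `S j` partition `ι`, an assignment amounts to a choice of one partial assignment on each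
block, hence, through the `e j`, to a function `Fin k → W`. Reindexing the sum along this bijection
(`bijective_blocks`) gives `∑ p : Fin k → W, ∏ j, G (p j)`, which is the expansion of
`(∑ w, G w) ^ k` given by `Fintype.sum_pow`.
-/

open Finset

theorem bijective_blocks {ι κ : Type*} {V : ι → Type*} (S : κ → Finset ι)
    (hdisj : ∀ j l, j ≠ l → Disjoint (S j) (S l)) (hcover : ∀ i, ∃ j, i ∈ S j)
    {W : Type*} (e : (j : κ) → (((i : (S j : Finset ι)) → V i) ≃ W)) :
    Function.Bijective (fun (v : ∀ i, V i) (j : κ) => e j (fun i => v i)) := by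
  choose J hJ using hcover
  have hJ_eq : ∀ i j, i ∈ S j → j = J i := fun i j hij => by
    by_contra hne
    exact Finset.disjoint_left.mp (hdisj j (J i) hne) hij (hJ i)
  constructor
  · intro v w hvw
    funext i
    exact congrFun ((e (J i)).injective (congrFun hvw (J i))) ⟨i, hJ i⟩
  · intro p
    refine ⟨fun i => (e (J i)).symm (p (J i)) ⟨i, hJ i⟩, funext fun j => ?_⟩
    apply (e j).symm.injective
    rw [Equiv.symm_apply_apply]
    funext ⟨i, hi⟩
    obtain rfl := hJ_eq i j hi
    rfl

/-- Correctness of lifted aggregation by exponentiation: when a sum-product decomposes into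
`k` independent isomorphic subproblems (each factor being a copy `G ∘ e j` of a single
representative problem `G`), the answer is the result of one subproblem raised to the
power `k`. -/
theorem lifted_aggregation {ι : Type*} [Fintype ι] [DecidableEq ι]
    {V : ι → Type*} [∀ i, Fintype (V i)] {R : Type*} [CommSemiring R]
    {k : ℕ} (S : Fin k → Finset ι)
    (hdisj : ∀ j l, j ≠ l → Disjoint (S j) (S l))
    (hcover : Finset.univ.biUnion S = Finset.univ)
    (F : (j : Fin k) → ((i : (S j : Finset ι)) → V i) → R)
    (W : Type*) [Fintype W] (G : W → R)
    (e : (j : Fin k) → (((i : (S j : Finset ι)) → V i) ≃ W))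
    (hF : ∀ j u, F j u = G (e j u)) :
    ∑ v : (∀ i, V i), ∏ j, F j (fun i => v i) = (∑ w : W, G w) ^ k := by
  have hcov : ∀ i, ∃ j, i ∈ S j := fun i => by
    simpa using Finset.ext_iff.mp hcover i
  rw [Fintype.sum_pow]
  exact Fintype.sum_bijective _ (bijective_blocks S hdisj hcov e) _ _
    fun v => Finset.prod_congr rfl fun j _ => hF j _
end

section
/- Let D be a finite type with d elements and R a commutative semiring, and let φ : Bool → Bool → R. Then the sum, over all functions F from the set {(x, y) ∈ D × D | x ≠ y} to Bool, of the product over all pairs (x, y) with x ≠ y of φ (F (x, y)) (F (y, x)), equals (∑_{a : Bool} ∑_{b : Bool} φ a b · φ b a)^{d(d−1)/2}. -/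
/-!
The ground factors split into independent groups, one for each unordered pair `{x, y}`. Fixing a
linear order on the domain, each ordered pair `(x, y)` with `x ≠ y` is uniquely an ascending pair
together with an orientation, which gives an equivalence `U × Bool ≃ {p // p.1 ≠ p.2}` under which
swapping the coordinates of a pair is negation of the `Bool` component. An assignment `F` then
becomes a family, indexed by `U`, of functions `Bool → Bool`, and the sum of products factors by
distributivity into `c ^ |U|`. Finally `2 * |U| = d * (d - 1)` by counting the off-diagonal pairs.
-/

open Finset

/-- The ascending pairs, for the order on `D` transported along `e`: representatives of the
unordered pairs of distinct elements. -/
abbrev AscPair {D : Type*} {d : ℕ} (e : D ≃ Fin d) : Type _ := {p : D × D // e p.1 < e p.2}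

/-- An ordered pair of distinct elements is an ascending pair with an orientation; `true` means
that the coordinates are swapped. -/
def ascPairEquiv {D : Type*} {d : ℕ} (e : D ≃ Fin d) :
    AscPair e × Bool ≃ {p : D × D // p.1 ≠ p.2} where
  toFun q := match q with
    | (u, false) => ⟨u.1, fun h => (ne_of_lt u.2) (congrArg e h)⟩
    | (u, true) => ⟨(u.1.2, u.1.1), fun h => (ne_of_lt u.2) (congrArg e h.symm)⟩
  invFun p := if h : e p.1.1 < e p.1.2 then (⟨p.1, h⟩, false)
    else (⟨(p.1.2, p.1.1), lt_of_le_of_ne (not_lt.mp h) fun h' => p.2 (e.injective h'.symm)⟩, true)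
  left_inv := by
    rintro ⟨⟨⟨x, y⟩, h⟩, _ | _⟩
    · exact dif_pos h
    · exact dif_neg (not_lt.mpr (le_of_lt h))
  right_inv := by
    rintro ⟨⟨x, y⟩, h⟩
    by_cases hlt : e x < e y <;> simp [hlt]

/-- Distributivity over independent pairs of variables: the groups indexed by `U` contribute one
factor `∑ a, ∑ b, φ a b * φ b a` each. -/
lemma sum_prod_not {U R : Type*} [Fintype U] [DecidableEq U] [CommSemiring R]
    (φ : Bool → Bool → R) :
    ∑ F : U × Bool → Bool, ∏ q : U × Bool, φ (F q) (F (q.1, !q.2)) =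
      (∑ a : Bool, ∑ b : Bool, φ a b * φ b a) ^ Fintype.card U := by
  have h1 : ∑ a : Bool, ∑ b : Bool, φ a b * φ b a =
      ∑ f : Bool → Bool, φ (f false) (f true) * φ (f true) (f false) := by
    rw [← Fintype.sum_prod_type' (fun a b => φ a b * φ b a)]
    exact (Fintype.sum_equiv (Equiv.boolArrowEquivProd Bool) _ _ fun f => rfl).symm
  rw [h1, ← Finset.card_univ, ← Finset.prod_const, Finset.prod_univ_sum, Fintype.piFinset_univ]
  refine Fintype.sum_equiv (Equiv.curry U Bool Bool) _ _ fun F => ?_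
  rw [Fintype.prod_prod_type]
  refine Finset.prod_congr rfl fun u _ => ?_
  simp [Function.curry, mul_comm]

lemma card_ascPair {D : Type*} [Fintype D] [DecidableEq D] {d : ℕ} (e : D ≃ Fin d) :
    Fintype.card (AscPair e) = d * (d - 1) / 2 := by
  have hd : Fintype.card D = d := by simpa using Fintype.card_congr e
  have h := Fintype.card_congr (ascPairEquiv e)
  have h2 : Fintype.card {p : D × D // p.1 ≠ p.2} = d * (d - 1) := by
    rw [Fintype.card_subtype, Nat.mul_sub_one, ← hd, ← Finset.card_univ, ← Finset.offDiag_card]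
    congr 1
    ext p
    simp
  rw [h2, Fintype.card_prod, Fintype.card_bool] at h
  omega

/-- Lifted variable elimination for the symmetric-friends model of Example 1: the model
defined by the parfactor `φ(F(X,Y), F(Y,X))` with constraint `X ≠ Y` over a domain of size
`d` sums to `(∑_{a,b} φ a b · φ b a)^(d(d−1)/2)`. -/
theorem symmetric_friends_model {D : Type*} [Fintype D] [DecidableEq D]
    {R : Type*} [CommSemiring R] (d : ℕ) (hd : Fintype.card D = d)
    (φ : Bool → Bool → R) :
    ∑ F : {p : D × D // p.1 ≠ p.2} → Bool,
      ∏ p : {p : D × D // p.1 ≠ p.2}, φ (F p) (F ⟨(p.1.2, p.1.1), Ne.symm p.2⟩) =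
    (∑ a : Bool, ∑ b : Bool, φ a b * φ b a) ^ (d * (d - 1) / 2) := by
  have e : D ≃ Fin d := Fintype.equivFinOfCardEq hd
  rw [← card_ascPair e, ← sum_prod_not]
  refine Fintype.sum_equiv ((ascPairEquiv e).symm.arrowCongr (Equiv.refl Bool)) _ _ fun F => ?_
  refine (Fintype.prod_equiv (ascPairEquiv e) _ _ ?_).symm
  rintro ⟨u, _ | _⟩ <;> rfl
end

section
/- Let β be a finite type, M a commutative monoid, φ : β → β → M, and f : Fin n → β, and let h = hist f be the histogram of f. Then the product over all ordered pairs (i, j) with i ≠ j of φ (f i) (f j) equals the product over all pairs (a, b) : β × β of φ a b raised to the power (h a · (h a − 1)) if a = b and (h a · h b) if a ≠ b. In particular, this product depends on f only through its histogram. -/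
/-! Group the off-diagonal pairs `(i, j)` by their image `(f i, f j) = (a, b)`. On each fibre the
factor is the constant `φ a b`, so only the size of the fibre matters. Writing `F b` for the set of
indices mapped to `b`, the fibre is `F a ×ˢ F b` when `a ≠ b`, and the off-diagonal of `F a` when
`a = b`, which has `hist f a * (hist f a - 1)` elements. -/

open Finset

/-- The histogram of an assignment `f : Fin n → β`: `hist f b` is the number of indices
mapped to `b`. -/
def hist {n : ℕ} {β : Type*} [DecidableEq β] (f : Fin n → β) : β → ℕ :=
  fun b => (Finset.univ.filter fun i => f i = b).card

/-- General counting conversion: the value of the model `∏_{i ≠ j} φ(f i, f j)` is a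
function of the histogram of `f` alone. -/
theorem counting_conversion {β : Type*} [Fintype β] [DecidableEq β]
    {M : Type*} [CommMonoid M] (n : ℕ) (φ : β → β → M) (f : Fin n → β) :
    ∏ p ∈ Finset.univ.filter (fun p : Fin n × Fin n => p.1 ≠ p.2), φ (f p.1) (f p.2) =
      ∏ q : β × β, φ q.1 q.2 ^
        (if q.1 = q.2 then hist f q.1 * (hist f q.1 - 1) else hist f q.1 * hist f q.2) := by
  rw [← Finset.prod_fiberwise _ (fun p : Fin n × Fin n => (f p.1, f p.2))]
  refine Finset.prod_congr rfl fun ⟨a, b⟩ _ => ?_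
  rw [Finset.prod_congr rfl (g := fun _ => φ a b) (by
    intro p hp
    obtain ⟨rfl, rfl⟩ := Prod.mk.inj (Finset.mem_filter.1 hp).2
    rfl), Finset.prod_const]
  congr 1
  by_cases hab : a = b
  · subst hab
    have fibre : (univ.filter fun p : Fin n × Fin n => p.1 ≠ p.2).filter
        (fun p => (f p.1, f p.2) = (a, a)) = (univ.filter fun i => f i = a).offDiag := by
      ext p
      simp only [mem_filter, mem_univ, true_and, mem_offDiag, Prod.mk.injEq]
      tauto
    rw [fibre, offDiag_card, if_pos rfl, Nat.mul_sub_one]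
    rfl
  · have fibre : (univ.filter fun p : Fin n × Fin n => p.1 ≠ p.2).filter
        (fun p => (f p.1, f p.2) = (a, b)) =
        (univ.filter fun i => f i = a) ×ˢ (univ.filter fun i => f i = b) := by
      ext p
      simp only [mem_filter, mem_univ, true_and, mem_product, Prod.mk.injEq]
      -- The condition `p.1 ≠ p.2` is automatic, since `f p.1 = a` and `f p.2 = b` differ.
      exact ⟨fun h => h.2, fun h => ⟨fun e => hab (by rw [← h.1, ← h.2, e]), h⟩⟩
    rw [fibre, card_product, if_neg hab]
    rfl
end

section
/- Let β be a finite type, R a commutative semiring, and F : (β → ℕ) → R. Then ∑ over all functions f : Fin n → β of F (hist f) equals ∑ over all h : β → ℕ with ∑_{b : β} h b = n of (n! / ∏_{b : β} (h b)!) · F h, where the multinomial coefficient n! / ∏_b (h b)! is cast from ℕ into R. -/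
/-!
The joint assignments are grouped by their histogram, so everything rests on the count of the
assignments with a given histogram `h` (`card_hist_eq`). Both sides of that count are the
coefficient of `∏ b, X b ^ h b` in the polynomial `(∑ b, X b) ^ n`: distributing the product gives
one monomial `∏ b, X b ^ hist f b` for each `f : Fin n → β`, while the multinomial theorem gives
`n! / ∏ b, (h b)!`.
-/

open Finset

/-- The histograms over a finite type `β` for `n` objects form a finite type. -/
instance histogramFintype (β : Type*) [Fintype β] [DecidableEq β] (n : ℕ) :
    Fintype {h : β → ℕ // ∑ b, h b = n} :=
  Fintype.subtype
    ((Fintype.piFinset fun _ : β => Finset.range (n + 1)).filter fun h => ∑ b, h b = n)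
    (by
      intro h
      simp only [Finset.mem_filter, Fintype.mem_piFinset, Finset.mem_range]
      constructor
      · rintro ⟨-, h2⟩; exact h2
      · intro hsum
        refine ⟨fun b => ?_, hsum⟩
        have : h b ≤ n :=
          hsum ▸ Finset.single_le_sum (fun _ _ => Nat.zero_le _) (Finset.mem_univ b)
        omega)

theorem sum_hist {β : Type*} [Fintype β] [DecidableEq β] {n : ℕ} (f : Fin n → β) :
    ∑ b, hist f b = n := by
  simpa [hist] using (Finset.card_eq_sum_card_fiberwise (f := f) (s := Finset.univ)
    (t := Finset.univ) (fun _ _ => Finset.mem_coe.2 (Finset.mem_univ _))).symm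

theorem prod_X_pow_eq_monomial {β : Type*} [Fintype β] (h : β → ℕ) :
    ∏ b, (MvPolynomial.X b : MvPolynomial β ℕ) ^ h b =
      MvPolynomial.monomial (Finsupp.equivFunOnFinite.symm h) 1 := by
  rw [MvPolynomial.monomial_eq, Finsupp.prod_fintype _ _ (by simp)]
  simp

theorem prod_X_comp_eq_monomial {β : Type*} [Fintype β] [DecidableEq β] {n : ℕ}
    (f : Fin n → β) :
    ∏ i, (MvPolynomial.X (f i) : MvPolynomial β ℕ) =
      MvPolynomial.monomial (Finsupp.equivFunOnFinite.symm (hist f)) 1 := by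
  rw [← prod_X_pow_eq_monomial, ← Finset.prod_fiberwise Finset.univ f]
  refine Finset.prod_congr rfl fun b _ => ?_
  rw [hist, ← Finset.prod_const]
  refine Finset.prod_congr rfl fun i hi => ?_
  rw [(Finset.mem_filter.1 hi).2]

/-- The number of assignments with histogram `h` is the multinomial coefficient of `h`: compare
the coefficients of `∏ b, X b ^ h b` in two expansions of `(∑ b, X b) ^ n`. -/
theorem card_hist_eq {β : Type*} [Fintype β] [DecidableEq β] {n : ℕ} (h : β → ℕ)
    (hn : ∑ b, h b = n) :
    (Finset.univ.filter fun f : Fin n → β => hist f = h).card =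
      n.factorial / ∏ b, (h b).factorial := by
  have key := (Fintype.sum_pow (fun b => (MvPolynomial.X b : MvPolynomial β ℕ)) n).symm.trans
    (Finset.sum_pow_eq_sum_piAntidiag Finset.univ
      (fun b => (MvPolynomial.X b : MvPolynomial β ℕ)) n)
  have hcast (k : ℕ) : (k : MvPolynomial β ℕ) = MvPolynomial.C k := by simp
  have hc := congrArg (MvPolynomial.coeff (Finsupp.equivFunOnFinite.symm h)) key
  simp only [prod_X_comp_eq_monomial, prod_X_pow_eq_monomial, MvPolynomial.coeff_sum,
    hcast, MvPolynomial.coeff_C_mul, MvPolynomial.coeff_monomial,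
    Equiv.apply_eq_iff_eq] at hc
  rw [Finset.card_filter, hc]
  simp [Nat.multinomial, hn]

/-- Correctness of counting: a sum over all joint assignments of a function of the
histogram equals the sum over histograms `h` weighted by the multinomial coefficient
`Mul(h) = n! / ∏_b (h b)!`. -/
theorem counting_correctness {β : Type*} [Fintype β] [DecidableEq β]
    {R : Type*} [CommSemiring R] (n : ℕ) (F : (β → ℕ) → R) :
    ∑ f : Fin n → β, F (hist f) =
      ∑ h : {h : β → ℕ // ∑ b, h b = n},
        ((n.factorial / ∏ b, ((h : β → ℕ) b).factorial : ℕ) : R) * F h := by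
  have hfib (h : {h : β → ℕ // ∑ b, h b = n}) :
      ∑ f : Fin n → β with (⟨hist f, sum_hist f⟩ : {h : β → ℕ // ∑ b, h b = n}) = h,
        F (hist f) = ((n.factorial / ∏ b, (h.1 b).factorial : ℕ) : R) * F h := by
    rw [← card_hist_eq h.1 h.2, ← nsmul_eq_mul, ← Finset.sum_const]
    simp only [Subtype.ext_iff]
    refine Finset.sum_congr rfl fun f hf => ?_
    rw [(Finset.mem_filter.1 hf).2]
  simp only [← hfib]
  exact (Finset.sum_fiberwise Finset.univ _ _).symm
end

section
/- Let β be a finite type and h : β → ℕ. If ∑_{b : β} h b = n, then the number of functions f : Fin n → β with hist f = h equals n! / ∏_{b : β} (h b)!; if ∑_{b : β} h b ≠ n, then no function f : Fin n → β has hist f = h. -/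
/-!
Expanding `(∑ b, X b) ^ n` in `ℕ[X b : b ∈ β]` in two ways gives the count. As a product of `n`
sums it is `∑ f : Fin n → β, ∏ i, X (f i)`, and `∏ i, X (f i)` is the monomial with exponent
`hist f`, so the coefficient at `h` is the number of `f` with histogram `h`. By the multinomial
theorem that coefficient is the multinomial coefficient of `h` when `∑ b, h b = n`. The second
claim holds because the fibres of `f` partition `Fin n`, so that a histogram always sums to `n`.
-/

open Finset

theorem coeff_prod_X_pow {β : Type*} [Fintype β] [DecidableEq β] (h k : β → ℕ) :
    MvPolynomial.coeff (Finsupp.equivFunOnFinite.symm h)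
      (∏ b, (MvPolynomial.X b : MvPolynomial β ℕ) ^ k b) = if k = h then 1 else 0 := by
  have : (∏ b, (MvPolynomial.X b : MvPolynomial β ℕ) ^ k b) =
      MvPolynomial.monomial (Finsupp.equivFunOnFinite.symm k) 1 := by
    rw [MvPolynomial.monomial_eq, Finsupp.prod_fintype _ _ (by simp)]
    simp
  rw [this, MvPolynomial.coeff_monomial]
  simp

theorem prod_X_comp {β : Type*} [Fintype β] [DecidableEq β] {n : ℕ} (f : Fin n → β) :
    ∏ i, (MvPolynomial.X (f i) : MvPolynomial β ℕ) = ∏ b, MvPolynomial.X b ^ hist f b := by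
  rw [← Finset.prod_fiberwise univ f]
  refine Finset.prod_congr rfl fun b _ => ?_
  exact Finset.prod_eq_pow_card fun i hi => by rw [(Finset.mem_filter.mp hi).2]

/-- `Mul(h)`, the number of assignments `f : Fin n → β` with histogram `h`, is the
multinomial coefficient `n! / ∏_b (h b)!` when `∑_b h b = n`, and `0` otherwise. -/
theorem card_assignments_with_histogram {β : Type*} [Fintype β] [DecidableEq β]
    (n : ℕ) (h : β → ℕ) :
    ((∑ b, h b = n) →
        (Finset.univ.filter fun f : Fin n → β => hist f = h).card =
          n.factorial / ∏ b, (h b).factorial) ∧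
      ((∑ b, h b ≠ n) → ∀ f : Fin n → β, hist f ≠ h) := by
  refine ⟨fun hn => ?_, fun hn f hf => hn (hf ▸ sum_hist f)⟩
  have expand : (∑ b, (MvPolynomial.X b : MvPolynomial β ℕ)) ^ n =
      ∑ f : Fin n → β, ∏ b, MvPolynomial.X b ^ hist f b := by
    simp_rw [← prod_X_comp]
    simpa using Finset.prod_univ_sum (fun _ : Fin n => (univ : Finset β))
      (fun _ b => (MvPolynomial.X b : MvPolynomial β ℕ))
  rw [Finset.sum_pow_eq_sum_piAntidiag] at expand
  have key := congrArg (MvPolynomial.coeff (Finsupp.equivFunOnFinite.symm h)) expand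
  simp_rw [MvPolynomial.coeff_sum, ← nsmul_eq_mul, MvPolynomial.coeff_smul,
    coeff_prod_X_pow] at key
  rw [Finset.card_filter, ← key]
  simp [hn, Nat.multinomial]
end

section
/- Let R be a commutative semiring and φ : Bool → Bool → R. Then ∑ over all functions f : Fin n → Bool of the product over all ordered pairs (i, j) with i ≠ j of φ (f i) (f j) equals ∑_{k=0}^{n} C(n, k) · φ true true ^ (k·(k−1)) · φ true false ^ (k·(n−k)) · φ false true ^ ((n−k)·k) · φ false false ^ ((n−k)·(n−k−1)), where the binomial coefficient C(n, k) is cast from ℕ into R. -/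
/-!
A Boolean assignment `f` on `Fin n` is the same thing as its set `s` of true points. Sorting the
ordered pairs of distinct points by the pair of values `(f i, f j)` splits them into `s.offDiag`,
`s ×ˢ sᶜ`, `sᶜ ×ˢ s` and `sᶜ.offDiag`, so the product depends only on `k = #s` and equals the
monomial with exponents `k (k - 1)`, `k (n - k)`, `(n - k) k`, `(n - k) (n - k - 1)`
(`prod_pairs_eq`). Summing over `s` grouped by cardinality then produces the weights `n.choose k`.
-/

open Finset

/-- The weight of the assignment with set of true points `s` depends only on the histogram
`(#s, n - #s)`. -/
theorem prod_pairs_eq {R : Type*} [CommSemiring R] (n : ℕ) (φ : Bool → Bool → R)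
    (s : Finset (Fin n)) :
    ∏ p ∈ Finset.univ.filter (fun p : Fin n × Fin n => p.1 ≠ p.2),
        φ (decide (p.1 ∈ s)) (decide (p.2 ∈ s)) =
      φ true true ^ (#s * (#s - 1)) * φ true false ^ (#s * (n - #s)) *
        φ false true ^ ((n - #s) * #s) * φ false false ^ ((n - #s) * (n - #s - 1)) := by
  have hc : #sᶜ = n - #s := by rw [card_compl, Fintype.card_fin]
  have hoff (t : Finset (Fin n)) : #t.offDiag = #t * (#t - 1) := by
    rw [offDiag_card, Nat.mul_sub_one]
  rw [← prod_filter_mul_prod_filter_not _ (fun p : Fin n × Fin n => p.1 ∈ s),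
    ← prod_filter_mul_prod_filter_not (filter (fun p : Fin n × Fin n => p.1 ∈ s) _)
      (fun p => p.2 ∈ s),
    ← prod_filter_mul_prod_filter_not (filter (fun p : Fin n × Fin n => ¬ p.1 ∈ s) _)
      (fun p => p.2 ∈ s), ← mul_assoc]
  congr 1
  · congr 1
    · congr 1
      · rw [← hoff]
        refine (prod_congr (s₂ := s.offDiag) ?_ ?_).trans (prod_const _)
        · ext p; simp only [mem_filter, mem_univ, mem_offDiag]; tauto
        · intro p hp; simp only [mem_offDiag] at hp; simp [hp]
      · rw [← hc, ← card_product]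
        refine (prod_congr (s₂ := s ×ˢ sᶜ) ?_ ?_).trans (prod_const _)
        · ext p; simp only [mem_filter, mem_univ, mem_product, mem_compl]; grind
        · intro p hp; simp only [mem_product, mem_compl] at hp; simp [hp]
    · rw [← hc, ← card_product]
      refine (prod_congr (s₂ := sᶜ ×ˢ s) ?_ ?_).trans (prod_const _)
      · ext p; simp only [mem_filter, mem_univ, mem_product, mem_compl]; grind
      · intro p hp; simp only [mem_product, mem_compl] at hp; simp [hp]
  · rw [← hc, ← hoff]
    refine (prod_congr (s₂ := sᶜ.offDiag) ?_ ?_).trans (prod_const _)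
    · ext p; simp only [mem_filter, mem_univ, mem_offDiag, mem_compl]; tauto
    · intro p hp; simp only [mem_offDiag, mem_compl] at hp; simp [hp]

/-- Full lifted variable elimination for the model of Example 2 (parfactor
`φ(S(X), S(Y))` with constraint `X ≠ Y` over a domain of size `n`): summing out the
counting randvar enumerates histograms (`k` trues, `n − k` falses) weighted by `C(n, k)`. -/
theorem lve_example2 {R : Type*} [CommSemiring R] (n : ℕ) (φ : Bool → Bool → R) :
    ∑ f : Fin n → Bool,
      ∏ p ∈ Finset.univ.filter (fun p : Fin n × Fin n => p.1 ≠ p.2), φ (f p.1) (f p.2) =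
    ∑ k ∈ Finset.range (n + 1),
      (n.choose k : R) * φ true true ^ (k * (k - 1)) * φ true false ^ (k * (n - k)) *
        φ false true ^ ((n - k) * k) * φ false false ^ ((n - k) * (n - k - 1)) := by
  have key := sum_powerset_apply_card (x := (univ : Finset (Fin n))) (fun k => φ true true ^ (k * (k - 1)) *
    φ true false ^ (k * (n - k)) * φ false true ^ ((n - k) * k) *
    φ false false ^ ((n - k) * (n - k - 1)))
  simp only [powerset_univ, card_univ, Fintype.card_fin, nsmul_eq_mul, ← mul_assoc] at key
  rw [← key]
  refine sum_bij' (fun f _ => univ.filter (fun i => f i = true)) (fun s _ i => decide (i ∈ s))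
    (by simp) (by simp) (by simp) (by simp) ?_
  intro f _
  rw [← prod_pairs_eq]
  simp
end
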